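/- Let p, q be idempotents in a ring R with p − q Drazin invertible. Then p − qp is Drazin invertible with (p − qp)^D = ((p−q)^D)³ p. -/

import Mathlib

/-- `b` is the Drazin inverse of `a`. -/
def IsDrazinInverse {R : Type*} [Ring R] (a b : R) : Prop :=
  a * b = b * a ∧ b * a * b = b ∧ IsNilpotent (a - a * a * b)

/-!
Put `a = p - q`. Then `p - q * p = a * p`, the square `a ^ 2` commutes with `p`, and
`p * a * p = a ^ 2 * p`. As a product of commuting Drazin invertible elements, `a ^ 2 * p` has
Drazin inverse `d ^ 2 * p`. Since `p * (a * p) = a ^ 2 * p` and `(a * p) * p = a * p`, Cline's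
formula, which relates the Drazin inverses of `x * y` and `y * x`, gives the Drazin inverse
`a * p * (d ^ 2 * p) ^ 2 * p = d ^ 3 * p` of `a * p`.
-/

theorem isNilpotent_mul_swap {M : Type*} [MonoidWithZero M] {x y : M}
    (h : IsNilpotent (x * y)) : IsNilpotent (y * x) := by
  obtain ⟨n, hn⟩ := h
  refine ⟨n + 1, ?_⟩
  rw [pow_succ, ← mul_assoc, mul_pow_mul, hn, mul_zero, zero_mul]

theorem isNilpotent_mul_sub_mul {R : Type*} [Ring R] {x y u v : R}
    (hx : IsNilpotent (x - u)) (hy : IsNilpotent (y - v)) (hxy : Commute x y)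
    (hxu : Commute x u) (hxv : Commute x v) (huy : Commute u y) (huv : Commute u v)
    (hyv : Commute y v) : IsNilpotent (x * y - u * v) := by
  have hleft : IsNilpotent ((x - u) * y) := (hxy.sub_left huy).isNilpotent_mul_right hx
  have hright : IsNilpotent (u * (y - v)) := (huy.sub_right huv).isNilpotent_mul_left hy
  have hdiff_u : Commute (x - u) u := hxu.sub_left (Commute.refl u)
  have hdiff : Commute (x - u) (y - v) := (hxy.sub_left huy).sub_right (hxv.sub_left huv)
  have hcomm : Commute ((x - u) * y) (u * (y - v)) :=
    (hdiff_u.mul_right hdiff).mul_left (huy.symm.mul_right ((Commute.refl y).sub_right hyv))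
  have hsplit : x * y - u * v = (x - u) * y + u * (y - v) := by noncomm_ring
  rw [hsplit]
  exact hcomm.isNilpotent_add hleft hright

namespace IsDrazinInverse

variable {R : Type*} [Ring R] {a b a' b' c p x y : R}

theorem commute (h : IsDrazinInverse a b) : Commute a b := h.1

theorem mul_mul_self (h : IsDrazinInverse a b) : b * a * b = b := h.2.1

theorem isNilpotent_sub (h : IsDrazinInverse a b) : IsNilpotent (a - a * a * b) := h.2.2

theorem isIdempotentElem_mul (h : IsDrazinInverse a b) : IsIdempotentElem (a * b) := by
  rw [IsIdempotentElem, mul_assoc, ← mul_assoc b, h.mul_mul_self]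

theorem exists_pow_mul_mul_eq (h : IsDrazinInverse a b) :
    ∃ n ≠ 0, a ^ n * (a * b) = a ^ n := by
  obtain ⟨k, hk⟩ := h.isNilpotent_sub
  have hcomm : Commute a (1 - a * b) :=
    (Commute.one_right a).sub_right ((Commute.refl a).mul_right h.commute)
  have hpow : (a - a * a * b) ^ (k + 1) = a ^ (k + 1) * (1 - a * b) := by
    rw [← h.isIdempotentElem_mul.one_sub.pow_succ_eq k, ← hcomm.mul_pow, mul_sub, mul_one,
      mul_assoc]
  refine ⟨k + 1, k.succ_ne_zero, ?_⟩
  rw [pow_succ, hk, zero_mul, mul_sub, mul_one] at hpow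
  exact (sub_eq_zero.mp hpow.symm).symm

theorem commute_mul_of_commute (h : IsDrazinInverse a b) (hc : Commute c a) :
    Commute c (a * b) := by
  obtain ⟨n, hn, han⟩ := h.exists_pow_mul_mul_eq
  have hcn : c * a ^ n = a ^ n * c := (hc.pow_right n).eq
  have hen : a * b * a ^ n = a ^ n := by
    rw [((Commute.self_pow a n).mul_left (h.commute.symm.pow_right n)).eq, han]
  have he : a * b = a ^ n * b ^ n := by
    rw [← h.commute.mul_pow, h.isIdempotentElem_mul.pow_eq hn]
  have he' : a * b = b ^ n * a ^ n := by
    rw [he, (h.commute.pow_pow n n).eq]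
  calc c * (a * b) = a ^ n * c * b ^ n := by rw [he, ← mul_assoc, hcn]
    _ = a * b * (a ^ n * c * b ^ n) := by rw [← mul_assoc, ← mul_assoc, hen]
    _ = a * b * c * (a * b) := by rw [← hcn, mul_assoc c, ← he, ← mul_assoc]
    _ = b ^ n * c * (a ^ n * (a * b)) := by
      nth_rw 1 [he']
      rw [mul_assoc (b ^ n), ← hcn]
      simp only [mul_assoc]
    _ = a * b * c := by rw [han, mul_assoc, hcn, ← mul_assoc, ← he']

theorem commute_of_commute (h : IsDrazinInverse a b) (hc : Commute c a) : Commute c b := by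
  have hce : c * (a * b) = a * b * c := (h.commute_mul_of_commute hc).eq
  have heb : a * b * b = b := by rw [h.commute.eq, h.mul_mul_self]
  calc c * b = c * (a * b) * b := by rw [mul_assoc, heb]
    _ = b * (a * c) * b := by rw [hce, h.commute.eq, mul_assoc b]
    _ = b * (c * (a * b)) := by rw [← hc.eq]; simp only [mul_assoc]
    _ = b * c := by rw [hce, ← mul_assoc, ← mul_assoc, h.mul_mul_self]

theorem commute_self_mul_self_mul (h : IsDrazinInverse a b) (hc : Commute c a) :
    Commute c (a * a * b) :=
  (hc.mul_right hc).mul_right (h.commute_of_commute hc)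

theorem mul (h : IsDrazinInverse a b) (h' : IsDrazinInverse a' b') (hcomm : Commute a a') :
    IsDrazinInverse (a * a') (b * b') := by
  have hab' : Commute a b' := h'.commute_of_commute hcomm
  have hba' : Commute b a' := (h.commute_of_commute hcomm.symm).symm
  have hbb' : Commute b b' := h'.commute_of_commute hba'
  refine ⟨((h.commute.mul_right hab').mul_left (hba'.symm.mul_right h'.commute)).eq, ?_, ?_⟩
  · calc b * b' * (a * a') * (b * b') = b * a * (b' * a') * (b * b') := by
          rw [hab'.symm.mul_mul_mul_comm]
      _ = b * a * b * (b' * a' * b') := (hbb'.symm.mul_left hba'.symm).mul_mul_mul_comm _ _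
      _ = b * b' := by rw [h.mul_mul_self, h'.mul_mul_self]
  · have hmul : a * a' * (a * a') * (b * b') = a * a * b * (a' * a' * b') := by
      rw [hcomm.symm.mul_mul_mul_comm, (hba'.symm.mul_left hba'.symm).mul_mul_mul_comm]
    have hau : Commute a (a * a * b) := h.commute_self_mul_self_mul (Commute.refl a)
    have hau' : Commute a (a' * a' * b') := h'.commute_self_mul_self_mul hcomm
    have hua' : Commute (a * a * b) a' := (h.commute_self_mul_self_mul hcomm.symm).symm
    rw [hmul]
    exact isNilpotent_mul_sub_mul h.isNilpotent_sub h'.isNilpotent_sub hcomm hau hau' hua'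
      (h'.commute_self_mul_self_mul hua') (h'.commute_self_mul_self_mul (Commute.refl a'))

theorem pow (h : IsDrazinInverse a b) (n : ℕ) : IsDrazinInverse (a ^ n) (b ^ n) := by
  induction n with
  | zero => simp [IsDrazinInverse]
  | succ n ih => simpa only [pow_succ] using ih.mul h (Commute.pow_self a n)

theorem of_isIdempotentElem (hp : IsIdempotentElem p) : IsDrazinInverse p p := by
  simp [IsDrazinInverse, hp.eq]

/-- Cline's formula. -/
theorem mul_swap (h : IsDrazinInverse (x * y) c) :
    IsDrazinInverse (y * x) (y * c ^ 2 * x) := by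
  have hc : x * y * c ^ 2 = c := by
    rw [pow_two, ← mul_assoc, h.commute.eq, h.mul_mul_self]
  have hc' : c ^ 2 * (x * y) = c := by
    rw [← (h.commute.pow_right 2).eq, hc]
  have hleft : y * x * (y * c ^ 2 * x) = y * c * x := by
    nth_rw 2 [← hc]
    simp only [mul_assoc]
  have hright : y * c ^ 2 * x * (y * x) = y * c * x := by
    nth_rw 2 [← hc']
    simp only [mul_assoc]
  refine ⟨hleft.trans hright.symm, ?_, ?_⟩
  · calc y * c ^ 2 * x * (y * x) * (y * c ^ 2 * x) = y * (c * (x * y * c ^ 2)) * x := by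
          rw [hright]; simp only [mul_assoc]
      _ = y * c ^ 2 * x := by rw [hc, pow_two]
  · have hfactor : y * x - y * x * (y * x) * (y * c ^ 2 * x) = y * ((1 - x * y * c) * x) := by
      rw [mul_assoc (y * x), hleft]
      noncomm_ring
    rw [hfactor]
    apply isNilpotent_mul_swap
    convert h.isNilpotent_sub using 1
    rw [mul_assoc, sub_mul, one_mul, mul_assoc, ← h.commute.eq, ← mul_assoc]

theorem mul_of_isIdempotentElem (h : IsDrazinInverse a b) (hp : IsIdempotentElem p)
    (hcomm : Commute (a ^ 2) p) (hpap : p * (a * p) = a ^ 2 * p) :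
    IsDrazinInverse (a * p) (b ^ 3 * p) := by
  have hbp : Commute (b ^ 2) p := ((h.pow 2).commute_of_commute hcomm.symm).symm
  have hab : a * b ^ 2 = b := by
    rw [pow_two, ← mul_assoc, h.commute.eq, h.mul_mul_self]
  have hcorner : IsDrazinInverse (p * (a * p)) (b ^ 2 * p) :=
    hpap ▸ (h.pow 2).mul (of_isIdempotentElem hp) hcomm
  convert hcorner.mul_swap using 1
  · rw [mul_assoc, hp.eq]
  · calc b ^ 3 * p = a * b ^ 2 * b ^ 2 * p := by rw [hab, ← pow_succ']
      _ = a * (b ^ 2) ^ 2 * p := by rw [mul_assoc a, ← pow_two]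
      _ = a * p * (b ^ 2 * p) ^ 2 * p := by
        rw [hbp.mul_pow, mul_assoc a p, ← mul_assoc p, ← (hbp.pow_left 2).eq]
        simp only [mul_assoc, pow_two p, hp.eq]

end IsDrazinInverse

section IdempotentDifference

variable {R : Type*} [Ring R] {p q : R}

theorem commute_sq_sub_of_isIdempotentElem (hp : IsIdempotentElem p) (hq : IsIdempotentElem q) :
    Commute ((p - q) ^ 2) p := by
  have hsq : (p - q) ^ 2 = p - p * q - q * p + q := by
    rw [pow_two, sub_mul, mul_sub, mul_sub, hp.eq, hq.eq]; abel
  rw [hsq, Commute, SemiconjBy]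
  simp only [sub_mul, add_mul, mul_sub, mul_add, mul_assoc, hp.eq, hp.mul_self_mul]
  abel

theorem mul_sub_mul_self_of_isIdempotentElem (hp : IsIdempotentElem p)
    (hq : IsIdempotentElem q) : p * ((p - q) * p) = (p - q) ^ 2 * p := by
  simp only [pow_two, sub_mul, mul_sub, mul_assoc, hp.eq, hq.mul_self_mul]
  abel

end IdempotentDifference

theorem stmt9 {R : Type*} [Ring R] (p q d : R) (hp : p * p = p) (hq : q * q = q)
    (hd : IsDrazinInverse (p - q) d) :
    IsDrazinInverse (p - q * p) (d ^ 3 * p) := by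
  have hfactor : p - q * p = (p - q) * p := by rw [sub_mul, hp]
  rw [hfactor]
  exact hd.mul_of_isIdempotentElem hp (commute_sq_sub_of_isIdempotentElem hp hq)
    (mul_sub_mul_self_of_isIdempotentElem hp hq)
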